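/- arXiv:2207.08574 — 2 statements merged into one kernel-verified Lean document; each statement's English description precedes it below -/
import Mathlib

section
/- Let d ≥ 1 and let K1 and K2 be d×d real symmetric positive definite matrices. Suppose φ ∈ ℝ^d is a unit vector (‖φ‖ = 1) that is a shared eigenvector of K1 and K2, i.e., K1·φ = λ1·φ and K2·φ = λ2·φ for real numbers λ1 > 0 and λ2 > 0. Then |√(λ1·λ2)·(log λ1 − log λ2)| ≤ 2·∑_{i=1}^d ∑_{j=1}^d |K1(i,j) − K2(i,j)|·|φ(i)|·|φ(j)|. -/
open Matrix

/-!
For `a, b > 0` put `u = (log a - log b) / 2`. Then `a - b = 2 √(ab) sinh u`, so `|u| ≤ |sinh u|`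
says that `√(ab)` is at most the logarithmic mean of `a` and `b`. The difference of the
eigenvalues of `K₁` and `K₂` at a shared eigenvector `φ` is the quadratic form of `K₁ - K₂` at `φ`
divided by `‖φ‖²`, and the triangle inequality bounds that form entry by entry.
-/

theorem two_mul_sqrt_mul_mul_sinh_half_log_sub_log {a b : ℝ} (ha : 0 < a) (hb : 0 < b) :
    2 * √(a * b) * Real.sinh ((Real.log a - Real.log b) / 2) = a - b := by
  have exp_half_log {x : ℝ} (hx : 0 < x) : Real.exp (Real.log x / 2) = √x := by
    rw [Real.exp_half, Real.exp_log hx]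
  have hsa : √a ≠ 0 := (Real.sqrt_pos.2 ha).ne'
  have hsb : √b ≠ 0 := (Real.sqrt_pos.2 hb).ne'
  calc 2 * √(a * b) * Real.sinh ((Real.log a - Real.log b) / 2)
      = 2 * (√a * √b) * ((√a / √b - √b / √a) / 2) := by
        rw [Real.sqrt_mul ha.le, Real.sinh_eq, ← neg_div, neg_sub, sub_div (Real.log a),
          sub_div (Real.log b), Real.exp_sub, Real.exp_sub, exp_half_log ha, exp_half_log hb]
    _ = √a ^ 2 - √b ^ 2 := by field_simp
    _ = a - b := by rw [Real.sq_sqrt ha.le, Real.sq_sqrt hb.le]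

theorem abs_sqrt_mul_mul_log_sub_log_le {a b : ℝ} (ha : 0 < a) (hb : 0 < b) :
    |√(a * b) * (Real.log a - Real.log b)| ≤ |a - b| := by
  set u := (Real.log a - Real.log b) / 2 with hu
  have abs_le_abs_sinh : |u| ≤ |Real.sinh u| := by
    rw [Real.abs_sinh]
    exact Real.self_le_sinh_iff.2 (abs_nonneg u)
  calc |√(a * b) * (Real.log a - Real.log b)|
      = |2 * √(a * b)| * |u| := by rw [← abs_mul, hu]; ring_nf
    _ ≤ |2 * √(a * b)| * |Real.sinh u| := by gcongr
    _ = |a - b| := by rw [← abs_mul, two_mul_sqrt_mul_mul_sinh_half_log_sub_log ha hb]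

theorem norm_dotProduct_mulVec_le {m n R : Type*} [Fintype m] [Fintype n]
    [NonUnitalSeminormedRing R] (A : Matrix m n R) (x : m → R) (y : n → R) :
    ‖x ⬝ᵥ A *ᵥ y‖ ≤ ∑ i, ∑ j, ‖A i j‖ * ‖x i‖ * ‖y j‖ := by
  simp only [dotProduct, mulVec, Finset.mul_sum]
  refine norm_sum_le_of_le _ fun i _ => norm_sum_le_of_le _ fun j _ => ?_
  calc ‖x i * (A i j * y j)‖
      ≤ ‖x i‖ * (‖A i j‖ * ‖y j‖) := norm_mul_le_of_le le_rfl (norm_mul_le _ _)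
    _ = ‖A i j‖ * ‖x i‖ * ‖y j‖ := by ring

section SharedEigenvector

variable {𝕜 n : Type*} [RCLike 𝕜] [Fintype n] {A B : Matrix n n 𝕜} {φ : EuclideanSpace 𝕜 n}

theorem norm_eigenvalue_sub_mul_norm_sq_le {μ ν : 𝕜} (hA : A *ᵥ φ = μ • (φ : n → 𝕜))
    (hB : B *ᵥ φ = ν • (φ : n → 𝕜)) :
    ‖μ - ν‖ * ‖φ‖ ^ 2 ≤ ∑ i, ∑ j, ‖A i j - B i j‖ * ‖φ i‖ * ‖φ j‖ := by
  have star_dotProduct_self : star (φ : n → 𝕜) ⬝ᵥ φ = (‖φ‖ : 𝕜) ^ 2 := by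
    rw [dotProduct_comm, ← EuclideanSpace.inner_eq_star_dotProduct, inner_self_eq_norm_sq_to_K]
  have quadratic_form_sub : star (φ : n → 𝕜) ⬝ᵥ (A - B) *ᵥ φ = (μ - ν) * (‖φ‖ : 𝕜) ^ 2 := by
    rw [sub_mulVec, hA, hB, ← sub_smul, dotProduct_smul, star_dotProduct_self, smul_eq_mul]
  calc ‖μ - ν‖ * ‖φ‖ ^ 2
      = ‖star (φ : n → 𝕜) ⬝ᵥ (A - B) *ᵥ φ‖ := by
        rw [quadratic_form_sub, norm_mul, norm_pow, RCLike.norm_ofReal, abs_norm]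
    _ ≤ ∑ i, ∑ j, ‖A i j - B i j‖ * ‖φ i‖ * ‖φ j‖ := by
        simpa only [Pi.star_apply, norm_star, Matrix.sub_apply] using
          norm_dotProduct_mulVec_le (A - B) (star (φ : n → 𝕜)) φ

theorem spd_shared_eigvec_diff_eigenvalue_bound_general {l1 l2 : ℝ} (hl1 : 0 < l1) (hl2 : 0 < l2)
    (hA : A *ᵥ φ = (l1 : 𝕜) • (φ : n → 𝕜)) (hB : B *ᵥ φ = (l2 : 𝕜) • (φ : n → 𝕜)) :
    |√(l1 * l2) * (Real.log l1 - Real.log l2)| * ‖φ‖ ^ 2 ≤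
      ∑ i, ∑ j, ‖A i j - B i j‖ * ‖φ i‖ * ‖φ j‖ :=
  calc |√(l1 * l2) * (Real.log l1 - Real.log l2)| * ‖φ‖ ^ 2
      ≤ |l1 - l2| * ‖φ‖ ^ 2 :=
        mul_le_mul_of_nonneg_right (abs_sqrt_mul_mul_log_sub_log_le hl1 hl2) (by positivity)
    _ = ‖(l1 : 𝕜) - l2‖ * ‖φ‖ ^ 2 := by rw [← RCLike.ofReal_sub, RCLike.norm_ofReal]
    _ ≤ ∑ i, ∑ j, ‖A i j - B i j‖ * ‖φ i‖ * ‖φ j‖ := norm_eigenvalue_sub_mul_norm_sq_le hA hB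

end SharedEigenvector

/-- Proposition 1 of the paper: bound on the eigenvalue of the Riemannian difference
operator associated with a shared unit eigenvector of two SPD kernels. -/
theorem spd_shared_eigvec_diff_eigenvalue_bound
    (d : ℕ) (hd : 1 ≤ d) (K1 K2 : Matrix (Fin d) (Fin d) ℝ)
    (hK1 : K1.PosDef) (hK2 : K2.PosDef)
    (φ : EuclideanSpace ℝ (Fin d)) (hφ : ‖φ‖ = 1)
    (l1 l2 : ℝ) (hl1 : 0 < l1) (hl2 : 0 < l2)
    (h1 : K1 *ᵥ φ = l1 • (φ : Fin d → ℝ))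
    (h2 : K2 *ᵥ φ = l2 • (φ : Fin d → ℝ)) :
    |Real.sqrt (l1 * l2) * (Real.log l1 - Real.log l2)| ≤
      2 * ∑ i, ∑ j, |K1 i j - K2 i j| * |φ i| * |φ j| := by
  refine le_trans ?_ (le_mul_of_one_le_left (by positivity) one_le_two)
  simpa only [hφ, one_pow, mul_one, Real.norm_eq_abs] using
    spd_shared_eigvec_diff_eigenvalue_bound_general hl1 hl2 h1 h2
end

section
/- For all real numbers a > 0 and b > 0, one has |√(a·b)·(log a − log b)| ≤ 2·|a − b|. -/
/-!
In logarithmic coordinates `a = exp x`, `b = exp y` the geometric mean `√(a * b)` is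
`exp ((x + y) / 2)`, and `a - b = 2 √(a * b) sinh ((x - y) / 2)`. The inequality `|t| ≤ |sinh t|`
therefore gives the sharp bound `|√(a * b) (log a - log b)| ≤ |a - b|`.
-/

theorem abs_le_abs_sinh (x : ℝ) : |x| ≤ |Real.sinh x| := by
  rw [Real.abs_sinh]
  exact Real.self_le_sinh_iff.2 (abs_nonneg x)

theorem exp_sub_exp_eq_two_mul_exp_mul_sinh (x y : ℝ) :
    Real.exp x - Real.exp y = 2 * Real.exp ((x + y) / 2) * Real.sinh ((x - y) / 2) := by
  have exp_x : Real.exp x = Real.exp ((x + y) / 2) * Real.exp ((x - y) / 2) := by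
    rw [← Real.exp_add]
    ring_nf
  have exp_y : Real.exp y = Real.exp ((x + y) / 2) * Real.exp (-((x - y) / 2)) := by
    rw [← Real.exp_add]
    ring_nf
  rw [Real.sinh_eq, exp_x, exp_y]
  ring

theorem abs_exp_half_add_mul_sub_le_abs_exp_sub_exp (x y : ℝ) :
    |Real.exp ((x + y) / 2) * (x - y)| ≤ |Real.exp x - Real.exp y| :=
  calc |Real.exp ((x + y) / 2) * (x - y)|
      = |2 * Real.exp ((x + y) / 2)| * |(x - y) / 2| := by
        rw [← abs_mul]
        ring_nf
    _ ≤ |2 * Real.exp ((x + y) / 2)| * |Real.sinh ((x - y) / 2)| :=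
        mul_le_mul_of_nonneg_left (abs_le_abs_sinh _) (abs_nonneg _)
    _ = |Real.exp x - Real.exp y| := by
        rw [← abs_mul, ← exp_sub_exp_eq_two_mul_exp_mul_sinh]

theorem abs_sqrt_mul_log_sub_log_le_abs_sub {a b : ℝ} (ha : 0 < a) (hb : 0 < b) :
    |Real.sqrt (a * b) * (Real.log a - Real.log b)| ≤ |a - b| := by
  have sqrt_mul_eq : Real.sqrt (a * b) = Real.exp ((Real.log a + Real.log b) / 2) := by
    rw [Real.exp_half, Real.exp_add, Real.exp_log ha, Real.exp_log hb]
  simpa only [sqrt_mul_eq, Real.exp_log ha, Real.exp_log hb] using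
    abs_exp_half_add_mul_sub_le_abs_exp_sub_exp (Real.log a) (Real.log b)

/-- The key scalar inequality in the proof of Proposition 1:
`|√(ab)(log a − log b)| ≤ 2|a − b|` for positive `a`, `b`. -/
theorem sqrt_mul_log_sub_log_abs_le_two_abs_sub
    (a b : ℝ) (ha : 0 < a) (hb : 0 < b) :
    |Real.sqrt (a * b) * (Real.log a - Real.log b)| ≤ 2 * |a - b| :=
  (abs_sqrt_mul_log_sub_log_le_abs_sub ha hb).trans
    (le_mul_of_one_le_left (abs_nonneg _) one_le_two)
end
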